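/- Let p be a prime, G an infinite group with G ≠ G' (G is not equal to its derived subgroup), and A a module over the group ring ℤ_pG with C_G(A) = 1, where ℤ_p is the ring of p-adic integers. If A/C_A(G) is not an Artinian ℤ_p-module and A/C_A(H) is an Artinian ℤ_p-module for every proper subgroup H of G, then G is isomorphic to a quasi-cyclic q-group C_{q^∞} for some prime q. -/

import Mathlib

/-- `C_A(H)`: the `R`-submodule of `A` consisting of the elements fixed by every
element of the subgroup `H` of `G`. -/
def moduleCentralizer (R : Type*) [Ring R] {G : Type*} [Group G] (A : Type*)
    [AddCommGroup A] [Module R A] [DistribMulAction G A] [SMulCommClass G R A]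
    (H : Subgroup G) : Submodule R A where
  carrier := {a | ∀ g ∈ H, g • a = a}
  add_mem' := fun {a b} ha hb g hg => by rw [smul_add, ha g hg, hb g hg]
  zero_mem' := fun g _ => smul_zero g
  smul_mem' := fun r a ha g hg => by rw [smul_comm, ha g hg]

/-- The quasi-cyclic (Prüfer) `q`-group `C_{q^∞}`: the `q`-primary component of `ℚ/ℤ`. -/
def PruferGroup (q : ℕ) (hq : q.Prime) :
    AddSubgroup (ℚ ⧸ AddSubgroup.zmultiples (1 : ℚ)) :=
  haveI : Fact q.Prime := ⟨hq⟩
  AddCommGroup.primaryComponent (ℚ ⧸ AddSubgroup.zmultiples (1 : ℚ)) q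

/-!
Since `A/C_A(H ⊔ K)` embeds in `A/C_A(H) × A/C_A(K)`, two proper subgroups of `G` never generate
`G`. An infinite group with this property has no proper subgroup of finite index, so it acts
trivially on every Artinian module, because orbits there are finite: the elements killed by a given
annihilator form a module of finite length over a ring with finite residue fields. For each `h`, the
subgroup generated by `h` and `G'` is proper and normal, hence `h` fixes every `g • a - a`; thus
`G` embeds in `Hom(A, C_A(G))` and is abelian.

An infinite abelian group in which two proper subgroups never generate the whole is divisible,
because a nonzero character of `G/nG` would have a proper kernel of finite index. Divisible
subgroups split off, so every nonzero homomorphism into it from a divisible group is surjective. An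
element of infinite order would therefore give an isomorphism with `ℚ`, whose quotient `ℚ/ℤ` has a
proper nonzero divisible subgroup, its `2`-primary component. An element of prime order `q` gives a
homomorphism from `C_{q^∞}` which is injective on the socle, hence an isomorphism.
-/

section FiniteOrbits

variable {R : Type*} [CommRing R]

theorem finite_of_isFiniteLength (hR : ∀ m : Ideal R, m.IsMaximal → Finite (R ⧸ m))
    {M : Type*} [AddCommGroup M] [Module R M] (hM : IsFiniteLength R M) : Finite M := by
  induction hM with
  | of_subsingleton => infer_instance
  | @of_simple_quotient M _ _ N _ _ hN =>
    obtain ⟨m, hm, ⟨e⟩⟩ := isSimpleModule_iff_quot_maximal.1 ‹IsSimpleModule R (M ⧸ N)›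
    have := hR m hm
    have : Finite (M ⧸ N.toAddSubgroup) := .of_equiv _ e.toEquiv.symm
    have : Finite N.toAddSubgroup := hN
    exact .of_addSubgroup_quotient N.toAddSubgroup

variable {V : Type*} [AddCommGroup V] [Module R V] [IsArtinian R V]

-- The torsion submodule is a module over `R ⧸ I`, an Artinian ring because it embeds in `V`.
theorem isNoetherian_torsionBySet_torsionOf (v : V) :
    IsNoetherian R (Submodule.torsionBySet R V (Ideal.torsionOf R V v)) := by
  let I := Ideal.torsionOf R V v
  have : IsArtinian R (R ⧸ I) :=
    isArtinian_of_linearEquiv (Ideal.quotTorsionOfEquivSpanSingleton R V v).symm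
  have : IsArtinianRing (R ⧸ I) := isArtinian_of_tower R inferInstance
  have : IsArtinian (R ⧸ I) (Submodule.torsionBySet R V I) := isArtinian_of_tower R inferInstance
  have : IsNoetherian (R ⧸ I) (Submodule.torsionBySet R V I) :=
    IsSemiprimaryRing.isNoetherian_iff_isArtinian.2 this
  exact ((Submodule.torsionBySet_isTorsionBySet
    (I : Set R)).semilinearMap.isNoetherian_iff_of_bijective Function.bijective_id).2 this

theorem finite_setOf_torsionOf_le (hR : ∀ m : Ideal R, m.IsMaximal → Finite (R ⧸ m)) (v : V) :
    {w : V | Ideal.torsionOf R V v ≤ Ideal.torsionOf R V w}.Finite := by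
  let T := Submodule.torsionBySet R V (Ideal.torsionOf R V v)
  have : Finite T := finite_of_isFiniteLength hR <|
    isFiniteLength_iff_isNoetherian_isArtinian.2
      ⟨isNoetherian_torsionBySet_torsionOf v, inferInstance⟩
  refine (Set.toFinite (T : Set V)).subset fun w hw => ?_
  exact (Submodule.mem_torsionBySet_iff _ _).2 fun r => hw r.2

theorem finite_range_representation_apply (hR : ∀ m : Ideal R, m.IsMaximal → Finite (R ⧸ m))
    {G : Type*} [Monoid G] (ρ : Representation R G V) (v : V) :
    (Set.range fun g => ρ g v).Finite := by
  refine (finite_setOf_torsionOf_le hR v).subset ?_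
  rintro _ ⟨g, rfl⟩ r hr
  rw [Ideal.mem_torsionOf_iff] at hr ⊢
  rw [← map_smul, hr, map_zero]

theorem representation_apply_eq_self (hR : ∀ m : Ideal R, m.IsMaximal → Finite (R ⧸ m))
    {G : Type*} [Group G] (hfi : ∀ H : Subgroup G, H.FiniteIndex → H = ⊤)
    (ρ : Representation R G V) (g : G) (v : V) : ρ g v = v := by
  let : MulAction G V := MulAction.compHom V ρ
  have : Finite (MulAction.orbit G v) :=
    (finite_range_representation_apply hR ρ v).to_subtype
  have : Finite (G ⧸ MulAction.stabilizer G v) :=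
    .of_equiv _ (MulAction.orbitEquivQuotientStabilizer G v)
  have htop := hfi (MulAction.stabilizer G v) Subgroup.finiteIndex_of_finite_quotient
  exact MulAction.mem_stabilizer_iff.1 (htop ▸ Subgroup.mem_top g)

end FiniteOrbits

theorem supIrred_orderIso_apply {α β : Type*} [SemilatticeSup α] [SemilatticeSup β] (e : α ≃o β)
    {a : α} (h : SupIrred a) : SupIrred (e a) := by
  refine ⟨fun hmin => h.1 (e.isMin_apply.1 hmin), fun b c hbc => ?_⟩
  have hsup : e.symm b ⊔ e.symm c = a := by rw [← map_sup, hbc, e.symm_apply_apply]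
  simpa only [e.symm_apply_eq] using h.2 hsup

theorem supIrred_top_of_surjective {G H : Type*} [AddGroup G] [AddGroup H] [Nontrivial H]
    (h : SupIrred (⊤ : AddSubgroup G)) {f : G →+ H} (hf : Function.Surjective f) :
    SupIrred (⊤ : AddSubgroup H) := by
  refine ⟨not_isMin_top, fun K L hKL => ?_⟩
  have hcomap : K.comap f ⊔ L.comap f = ⊤ := by
    rw [AddSubgroup.comap_sup_eq f K L hf, hKL, AddSubgroup.comap_top]
  refine (h.2 hcomap).imp ?_ ?_ <;>
  · intro htop
    rw [← AddSubgroup.comap_top f] at htop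
    exact AddSubgroup.comap_injective hf htop

section TopIrreducible

variable {G : Type*} [Group G] [Infinite G]

@[to_additive]
theorem not_isCyclic_of_supIrred_top (h : SupIrred (⊤ : Subgroup G)) : ¬ IsCyclic G := by
  intro hcyc
  obtain ⟨x, hx⟩ := isCyclic_iff_exists_zpowers_eq_top.1 hcyc
  have horder : orderOf x = 0 :=
    Infinite.orderOf_eq_zero_of_forall_mem_zpowers fun y => hx ▸ Subgroup.mem_top y
  have hpow : ∀ n : ℕ, n ≠ 1 → Subgroup.zpowers (x ^ n) ≠ ⊤ := by
    intro n hn htop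
    have hmem : x ∈ Subgroup.zpowers (x ^ n) := htop ▸ Subgroup.mem_top x
    rw [mem_zpowers_pow_iff, horder, Nat.gcd_zero_right] at hmem
    exact hn hmem
  have hsup : Subgroup.zpowers (x ^ 2) ⊔ Subgroup.zpowers (x ^ 3) = ⊤ := by
    rw [eq_top_iff, ← hx, Subgroup.zpowers_le]
    have hmem : (x ^ 2)⁻¹ * x ^ 3 ∈ Subgroup.zpowers (x ^ 2) ⊔ Subgroup.zpowers (x ^ 3) :=
      mul_mem (inv_mem (Subgroup.mem_sup_left (Subgroup.mem_zpowers _)))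
        (Subgroup.mem_sup_right (Subgroup.mem_zpowers _))
    have hx : (x ^ 2)⁻¹ * x ^ 3 = x := by rw [pow_succ x 2, inv_mul_cancel_left]
    rwa [hx] at hmem
  exact (h.2 hsup).elim (hpow 2 (by decide)) (hpow 3 (by decide))

@[to_additive addSubgroup_eq_top_of_finiteIndex_of_supIrred_top]
theorem eq_top_of_finiteIndex_of_supIrred_top (h : SupIrred (⊤ : Subgroup G)) (H : Subgroup G)
    [H.FiniteIndex] : H = ⊤ := by
  have : Fintype (G ⧸ H) := Fintype.ofFinite _
  have hsup : H ⊔ Finset.univ.sup (fun c : G ⧸ H => Subgroup.zpowers c.out) = ⊤ := by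
    refine eq_top_iff.2 fun g _ => ?_
    set c : G ⧸ H := QuotientGroup.mk g
    have hg : c.out⁻¹ * g ∈ H := QuotientGroup.eq.1 (Quotient.out_eq' c)
    rw [← mul_inv_cancel_left c.out g]
    refine mul_mem (Subgroup.mem_sup_right ?_) (Subgroup.mem_sup_left hg)
    exact Finset.le_sup (f := fun c : G ⧸ H => Subgroup.zpowers c.out) (Finset.mem_univ c)
      (Subgroup.mem_zpowers _)
  refine (h.2 hsup).resolve_right fun htop => ?_
  obtain ⟨c, -, hc⟩ := h.finset_sup_eq htop
  exact not_isCyclic_of_supIrred_top h (isCyclic_iff_exists_zpowers_eq_top.2 ⟨_, hc⟩)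

end TopIrreducible

theorem isArtinian_quotient_inf {R M : Type*} [Ring R] [AddCommGroup M] [Module R M]
    (N K : Submodule R M) [IsArtinian R (M ⧸ N)] [IsArtinian R (M ⧸ K)] :
    IsArtinian R (M ⧸ N ⊓ K) := by
  have hker : LinearMap.ker (N.mkQ.prod K.mkQ) = N ⊓ K := by
    rw [LinearMap.ker_prod, Submodule.ker_mkQ, Submodule.ker_mkQ]
  exact isArtinian_of_injective _
    (LinearMap.ker_eq_bot.1 (Submodule.ker_liftQ_eq_bot _ _ hker.ge hker.le))

section Centralizer

variable {R : Type*} [Ring R] {G : Type*} [Group G] {A : Type*} [AddCommGroup A] [Module R A]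
  [DistribMulAction G A] [SMulCommClass G R A]

theorem mem_moduleCentralizer_iff_le_stabilizer {H : Subgroup G} {a : A} :
    a ∈ moduleCentralizer R A H ↔ H ≤ MulAction.stabilizer G a :=
  Iff.rfl

theorem moduleCentralizer_bot : moduleCentralizer R A (⊥ : Subgroup G) = ⊤ :=
  eq_top_iff.2 fun _ _ => mem_moduleCentralizer_iff_le_stabilizer.2 bot_le

theorem moduleCentralizer_sup (H K : Subgroup G) :
    moduleCentralizer R A (H ⊔ K) = moduleCentralizer R A H ⊓ moduleCentralizer R A K := by
  ext a
  simp only [Submodule.mem_inf, mem_moduleCentralizer_iff_le_stabilizer, sup_le_iff]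

theorem supIrred_top_of_isArtinian_quotient_moduleCentralizer
    (hG : ¬ IsArtinian R (A ⧸ moduleCentralizer R A (⊤ : Subgroup G)))
    (hH : ∀ H : Subgroup G, H ≠ ⊤ → IsArtinian R (A ⧸ moduleCentralizer R A H)) :
    SupIrred (⊤ : Subgroup G) := by
  refine ⟨fun hmin => hG ?_, fun H K hHK => ?_⟩
  · rw [hmin.eq_bot, moduleCentralizer_bot]
    infer_instance
  · by_contra! hne
    have := hH H hne.1
    have := hH K hne.2
    rw [← hHK, moduleCentralizer_sup] at hG
    exact hG (isArtinian_quotient_inf _ _)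

theorem smul_mem_moduleCentralizer (N : Subgroup G) [N.Normal] (g : G) {a : A}
    (ha : a ∈ moduleCentralizer R A N) : g • a ∈ moduleCentralizer R A N := by
  intro n hn
  have hconj : g⁻¹ * n * g ∈ N := by
    simpa only [inv_inv] using Subgroup.Normal.conj_mem ‹_› n hn g⁻¹
  calc n • g • a
    _ = g • (g⁻¹ * n * g) • a := by simp only [smul_smul, mul_assoc, mul_inv_cancel_left]
    _ = g • a := by rw [ha _ hconj]

theorem commute_of_smul_sub_mem_moduleCentralizer_top
    (hfaith : ∀ g : G, (∀ a : A, g • a = a) → g = 1)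
    (hmem : ∀ (g : G) (a : A), g • a - a ∈ moduleCentralizer R A (⊤ : Subgroup G)) (g h : G) :
    Commute g h := by
  have hsmul (g h : G) (a : A) : (h * g) • a = g • a - a + h • a := by
    rw [mul_smul, ← sub_eq_iff_eq_add, ← smul_sub]
    exact hmem g a h (Subgroup.mem_top h)
  have hone : (h * g)⁻¹ * (g * h) = 1 := by
    refine hfaith _ fun a => ?_
    rw [mul_smul, inv_smul_eq_iff, hsmul, hsmul]
    abel
  exact (inv_mul_eq_one.1 hone).symm

end Centralizer

section CentralizerQuotient

variable {R : Type*} [CommRing R] {G : Type*} [Group G] {A : Type*} [AddCommGroup A] [Module R A]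
  [DistribMulAction G A] [SMulCommClass G R A]

theorem smul_sub_mem_moduleCentralizer (hR : ∀ m : Ideal R, m.IsMaximal → Finite (R ⧸ m))
    (hfi : ∀ H : Subgroup G, H.FiniteIndex → H = ⊤) (N : Subgroup G) [N.Normal]
    [IsArtinian R (A ⧸ moduleCentralizer R A N)] (g : G) (a : A) :
    g • a - a ∈ moduleCentralizer R A N := by
  let ρ : Representation R G (A ⧸ moduleCentralizer R A N) :=
    (Representation.ofDistribMulAction R G A).quotient _ fun g _ => smul_mem_moduleCentralizer N g
  exact (Submodule.Quotient.eq _).1 <|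
    representation_apply_eq_self hR hfi ρ g (Submodule.Quotient.mk a)

theorem smul_sub_mem_moduleCentralizer_top [Infinite G]
    (hR : ∀ m : Ideal R, m.IsMaximal → Finite (R ⧸ m)) (hG' : commutator G ≠ ⊤)
    (hirr : SupIrred (⊤ : Subgroup G))
    (hH : ∀ H : Subgroup G, H ≠ ⊤ → IsArtinian R (A ⧸ moduleCentralizer R A H))
    (g : G) (a : A) : g • a - a ∈ moduleCentralizer R A (⊤ : Subgroup G) := by
  intro h _
  have hzpowers : Subgroup.zpowers h ≠ ⊤ := fun htop =>
    not_isCyclic_of_supIrred_top hirr (isCyclic_iff_exists_zpowers_eq_top.2 ⟨h, htop⟩)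
  let N := Subgroup.zpowers h ⊔ commutator G
  have hN : N ≠ ⊤ := fun htop => (hirr.2 htop).elim hzpowers hG'
  have : N.Normal := Subgroup.Normal.of_commutator_le _ le_sup_right
  have := hH N hN
  exact smul_sub_mem_moduleCentralizer hR
    (fun H _ => eq_top_of_finiteIndex_of_supIrred_top hirr H) N g a h
    (Subgroup.mem_sup_left (Subgroup.mem_zpowers h))

end CentralizerQuotient

section Divisible

variable {G : Type*} [AddCommGroup G]

theorem nsmul_surjective_of_forall_finiteIndex
    (hfi : ∀ H : AddSubgroup G, H.FiniteIndex → H = ⊤) {n : ℕ} (hn : n ≠ 0) :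
    Function.Surjective (fun x : G => n • x) := by
  by_contra hns
  obtain ⟨y, hy⟩ := not_forall.1 hns
  let K : AddSubgroup G := (nsmulAddMonoidHom n).range
  obtain ⟨c, hc⟩ := CharacterModule.exists_character_apply_ne_zero_of_ne_zero
    (mt (QuotientAddGroup.eq_zero_iff (N := K) y).1 hy)
  let χ : G →+ AddCircle (1 : ℚ) := AddMonoidHom.comp c (QuotientAddGroup.mk' K)
  have hχ (x : G) : n • χ x = 0 := by
    have hx : (QuotientAddGroup.mk (n • x) : G ⧸ K) = 0 :=
      (QuotientAddGroup.eq_zero_iff _).2 ⟨x, rfl⟩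
    rw [← map_nsmul]
    exact (congrArg c hx).trans (map_zero c)
  have : Finite χ.range := ((AddCircle.finite_torsion (1 : ℚ) (Nat.pos_of_ne_zero hn)).subset
    (Set.range_subset_iff.2 hχ)).to_subtype
  have hker : χ.ker = ⊤ := hfi _ (AddSubgroup.finiteIndex_ker χ)
  have hy' : y ∈ χ.ker := hker ▸ AddSubgroup.mem_top y
  exact hc hy'

theorem eq_bot_or_eq_top_of_divisible (h : SupIrred (⊤ : AddSubgroup G)) (D : AddSubgroup G)
    [DivisibleBy D ℤ] : D = ⊥ ∨ D = ⊤ := by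
  obtain ⟨r, hr⟩ := (Module.Baer.of_divisible D).extension_property_addMonoidHom D.subtype
    D.subtype_injective (AddMonoidHom.id D)
  have hretract : ∀ d : D, r d = d := DFunLike.congr_fun hr
  have hsup : D ⊔ r.ker = ⊤ := by
    refine eq_top_iff.2 fun g _ => ?_
    rw [← add_sub_cancel (r g : G) g]
    refine add_mem (AddSubgroup.mem_sup_left (r g).2) (AddSubgroup.mem_sup_right ?_)
    rw [AddMonoidHom.mem_ker, map_sub, hretract, sub_self]
  refine (h.2 hsup).symm.imp_left fun hker => (AddSubgroup.eq_bot_iff_forall D).2 fun d hd => ?_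
  have hrd : r d = 0 := AddMonoidHom.mem_ker.1 (hker ▸ AddSubgroup.mem_top d)
  exact congrArg Subtype.val ((hretract ⟨d, hd⟩).symm.trans hrd)

theorem surjective_of_divisible (h : SupIrred (⊤ : AddSubgroup G)) {D : Type*} [AddCommGroup D]
    [DivisibleBy D ℤ] {f : D →+ G} (hf : f ≠ 0) : Function.Surjective f := by
  let : DivisibleBy f.range ℤ := f.rangeRestrict_surjective.divisibleBy _ fun d n => map_zsmul _ n d
  exact AddMonoidHom.range_eq_top.1 ((eq_bot_or_eq_top_of_divisible h f.range).resolve_left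
    (mt AddMonoidHom.range_eq_bot_iff.1 hf))

theorem exists_ratHom_apply_eq [DivisibleBy G ℤ] {t : ℚ} (ht : t ≠ 0) (x : G) :
    ∃ f : ℚ →+ G, f t = x := by
  have hinj : Function.Injective (zmultiplesHom ℚ t) := smul_left_injective ℤ ht
  obtain ⟨f, hf⟩ := (Module.Baer.of_divisible G).extension_property_addMonoidHom
    (zmultiplesHom ℚ t) hinj (zmultiplesHom G x)
  exact ⟨f, by simpa using DFunLike.congr_fun hf 1⟩

theorem injective_ratHom {f : ℚ →+ G} (hf : ¬ IsOfFinAddOrder (f 1)) : Function.Injective f := by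
  refine (injective_iff_map_eq_zero f).2 fun t ht => ?_
  have hnum : t.num • f 1 = 0 := by
    rw [← map_zsmul, zsmul_one, ← Rat.mul_den_eq_num, mul_comm, ← nsmul_eq_mul, map_nsmul, ht,
      smul_zero]
  refine Rat.num_eq_zero.1 (by_contra fun hne => hf ?_)
  exact isOfFinAddOrder_iff_zsmul_eq_zero.2 ⟨t.num, hne, hnum⟩

theorem nsmul_surjective_primaryComponent [DivisibleBy G ℕ] (q : ℕ) [Fact q.Prime] {n : ℕ}
    (hn : n ≠ 0) : Function.Surjective (fun x : AddCommGroup.primaryComponent G q => n • x) := by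
  rintro ⟨y, k, hk⟩
  have hq : q.Prime := Fact.out
  obtain ⟨j, m, hm, rfl⟩ := Nat.exists_eq_pow_mul_and_not_dvd hn q hq.ne_one
  obtain ⟨w, rfl : q ^ j • w = y⟩ := DivisibleBy.surjective_smul G ℕ (pow_ne_zero j hq.ne_zero) y
  have hw : q ^ (k + j) • w = 0 := by rw [pow_add, mul_smul, hk]
  have hcop : m.Coprime (addOrderOf w) :=
    (((hq.coprime_iff_not_dvd.2 hm).symm).pow_right _).coprime_dvd_right
      (addOrderOf_dvd_of_nsmul_eq_zero hw)
  obtain ⟨l, hl⟩ := exists_nsmul_eq_self_of_coprime hcop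
  refine ⟨⟨l • w, k + j, by rw [smul_comm, hw, smul_zero]⟩, Subtype.ext ?_⟩
  change (q ^ j * m) • l • w = q ^ j • w
  rw [mul_smul, smul_comm m, hl]

noncomputable instance divisibleByPrimaryComponent [DivisibleBy G ℤ] (q : ℕ) [Fact q.Prime] :
    DivisibleBy (AddCommGroup.primaryComponent G q) ℤ :=
  let : DivisibleBy G ℕ := AddGroup.divisibleByNatOfDivisibleByInt G
  let : DivisibleBy (AddCommGroup.primaryComponent G q) ℕ :=
    divisibleByOfSMulRightSurj _ _ fun hn => nsmul_surjective_primaryComponent q hn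
  AddGroup.divisibleByIntOfDivisibleByNat _

end Divisible

-- `AddCircle (1 : ℚ)` is definitionally the group `ℚ/ℤ` in which `PruferGroup` lives.
theorem addOrderOf_one_div {n : ℕ} (hn : 0 < n) :
    addOrderOf ((1 / n : ℚ) : AddCircle (1 : ℚ)) = n :=
  have : Fact ((0 : ℚ) < 1) := ⟨one_pos⟩
  AddCircle.addOrderOf_period_div hn

theorem mem_zmultiples_of_dvd_addOrderOf {u : AddCircle (1 : ℚ)} (hu : IsOfFinAddOrder u) {n : ℕ}
    (hn : n ∣ addOrderOf u) : ((1 / n : ℚ) : AddCircle (1 : ℚ)) ∈ AddSubgroup.zmultiples u := by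
  have : Fact ((0 : ℚ) < 1) := ⟨one_pos⟩
  have hpos : 0 < n := Nat.pos_of_dvd_of_pos hn hu.addOrderOf_pos
  set c : AddCircle (1 : ℚ) := ((1 / n : ℚ) : AddCircle (1 : ℚ))
  obtain ⟨m, -, hm, hmu⟩ := (AddCircle.addOrderOf_eq_pos_iff hpos).1
    (addOrderOf_nsmul_addOrderOf_sub hu.addOrderOf_pos.ne' hn)
  rw [AddCircle.natCast_div_mul_eq_nsmul] at hmu
  obtain ⟨l, hl⟩ := exists_nsmul_eq_self_of_coprime (x := c) (n := m) (by
    rwa [addOrderOf_one_div hpos])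
  rw [← hl, hmu]
  exact nsmul_mem (nsmul_mem (AddSubgroup.mem_zmultiples u) _) _

theorem not_supIrred_top_addCircle : ¬ SupIrred (⊤ : AddSubgroup (AddCircle (1 : ℚ))) := by
  intro h
  rcases eq_bot_or_eq_top_of_divisible h (AddCommGroup.primaryComponent _ 2) with hbot | htop
  · have hmem : ((1 / (2 : ℕ) : ℚ) : AddCircle (1 : ℚ)) ∈ AddCommGroup.primaryComponent _ 2 :=
      AddCommGroup.mem_primaryComponent_iff_addOrderOf.2 ⟨1, addOrderOf_one_div two_pos⟩
    rw [hbot, AddSubgroup.mem_bot, ← AddMonoid.addOrderOf_eq_one_iff,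
      addOrderOf_one_div two_pos] at hmem
    omega
  · obtain ⟨k, hk⟩ := AddCommGroup.mem_primaryComponent_iff_addOrderOf.1
      (htop ▸ AddSubgroup.mem_top ((1 / (3 : ℕ) : ℚ) : AddCircle (1 : ℚ)))
    rw [addOrderOf_one_div three_pos] at hk
    have h32 : 3 ∣ 2 := Nat.prime_three.dvd_of_dvd_pow hk.dvd
    omega

theorem isOfFinAddOrder_of_supIrred_top {G : Type*} [AddCommGroup G] [DivisibleBy G ℤ]
    (h : SupIrred (⊤ : AddSubgroup G)) (x : G) : IsOfFinAddOrder x := by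
  by_contra hx
  obtain ⟨f, rfl⟩ := exists_ratHom_apply_eq (one_ne_zero (α := ℚ)) x
  have hinj := injective_ratHom hx
  have hf0 : f ≠ 0 := by
    rintro rfl
    exact hx IsOfFinAddOrder.zero
  let e : ℚ ≃+ G := AddEquiv.ofBijective f ⟨hinj, surjective_of_divisible h hf0⟩
  let π : ℚ →+ AddCircle (1 : ℚ) := QuotientAddGroup.mk' _
  have hsurj : Function.Surjective (π.comp e.symm.toAddMonoidHom) :=
    (QuotientAddGroup.mk'_surjective _).comp e.symm.surjective
  have : Nontrivial (AddCircle (1 : ℚ)) := by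
    refine nontrivial_of_ne ((1 / (2 : ℕ) : ℚ) : AddCircle (1 : ℚ)) 0 fun hzero => ?_
    exact absurd (addOrderOf_one_div two_pos) (by rw [hzero, addOrderOf_zero]; decide)
  exact not_supIrred_top_addCircle (supIrred_top_of_surjective h hsurj)

theorem one_div_mem_pruferGroup {q : ℕ} (hq : q.Prime) :
    ((1 / q : ℚ) : AddCircle (1 : ℚ)) ∈ PruferGroup q hq :=
  have : Fact q.Prime := ⟨hq⟩
  AddCommGroup.mem_primaryComponent_iff_addOrderOf.2
    ⟨1, (addOrderOf_one_div hq.pos).trans (pow_one q).symm⟩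

theorem injective_comp_subtype_pruferGroup {G : Type*} [AddGroup G] {q : ℕ} (hq : q.Prime)
    {f : AddCircle (1 : ℚ) →+ G} (hf : f ((1 / q : ℚ) : AddCircle (1 : ℚ)) ≠ 0) :
    Function.Injective (f.comp (PruferGroup q hq).subtype) := by
  have : Fact q.Prime := ⟨hq⟩
  refine (injective_iff_map_eq_zero _).2 fun ⟨y, hy⟩ hfy => by_contra fun hy0 => hf ?_
  obtain ⟨k, hk⟩ := AddCommGroup.mem_primaryComponent_iff_addOrderOf.1 hy
  have hk0 : k ≠ 0 := by
    rintro rfl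
    exact hy0 (Subtype.ext (AddMonoid.addOrderOf_eq_one_iff.1 (hk.trans (pow_zero q))))
  have hyfin : IsOfFinAddOrder y := addOrderOf_pos_iff.1 (hk ▸ pow_pos hq.pos k)
  obtain ⟨l, hl⟩ := AddSubgroup.mem_zmultiples_iff.1
    (mem_zmultiples_of_dvd_addOrderOf hyfin (hk ▸ dvd_pow_self q hk0))
  calc f ((1 / q : ℚ) : AddCircle (1 : ℚ))
    _ = l • f y := by rw [← hl, map_zsmul]
    _ = 0 := (congrArg (l • ·) hfy).trans (zsmul_zero l)

theorem exists_addOrderOf_eq_prime {G : Type*} [AddMonoid G] {x : G} (hx : IsOfFinAddOrder x)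
    (hx0 : x ≠ 0) : ∃ (q : ℕ) (y : G), q.Prime ∧ addOrderOf y = q := by
  obtain ⟨q, hq, hqx⟩ := Nat.exists_prime_and_dvd (mt AddMonoid.addOrderOf_eq_one_iff.1 hx0)
  exact ⟨q, _, hq, addOrderOf_nsmul_addOrderOf_sub hx.addOrderOf_pos.ne' hqx⟩

theorem exists_addCircleHom_apply_eq {G : Type*} [AddCommGroup G] [DivisibleBy G ℤ] {n : ℕ}
    (hn : n ≠ 0) {x : G} (hx : n • x = 0) :
    ∃ f : AddCircle (1 : ℚ) →+ G, f ((1 / n : ℚ) : AddCircle (1 : ℚ)) = x := by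
  have hn0 : (n : ℚ) ≠ 0 := Nat.cast_ne_zero.2 hn
  obtain ⟨f, hf⟩ := exists_ratHom_apply_eq (one_div_ne_zero hn0) x
  have hf1 : f 1 = 0 := by
    rw [← mul_one_div_cancel hn0, ← nsmul_eq_mul, map_nsmul, hf, hx]
  exact ⟨QuotientAddGroup.lift _ f (AddSubgroup.zmultiples_le.2 (AddMonoidHom.mem_ker.2 hf1)), hf⟩

theorem exists_addEquiv_pruferGroup_of_divisible {G : Type*} [AddCommGroup G] [DivisibleBy G ℤ]
    (h : SupIrred (⊤ : AddSubgroup G)) :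
    ∃ (q : ℕ) (hq : q.Prime), Nonempty (G ≃+ PruferGroup q hq) := by
  have : Nontrivial G := AddSubgroup.nontrivial_iff.1 ⟨⟨_, _, h.ne_bot⟩⟩
  obtain ⟨y, hy⟩ := exists_ne (0 : G)
  obtain ⟨q, x, hq, hx⟩ := exists_addOrderOf_eq_prime (isOfFinAddOrder_of_supIrred_top h y) hy
  have hx0 : x ≠ 0 := mt AddMonoid.addOrderOf_eq_one_iff.2 (hx.trans_ne hq.ne_one)
  obtain ⟨f, rfl⟩ := exists_addCircleHom_apply_eq hq.ne_zero (hx ▸ addOrderOf_nsmul_eq_zero x)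
  let φ : PruferGroup q hq →+ G := f.comp (PruferGroup q hq).subtype
  have hφ0 : φ ≠ 0 := fun h0 => hx0 (DFunLike.congr_fun h0 ⟨_, one_div_mem_pruferGroup hq⟩)
  have : Fact q.Prime := ⟨hq⟩
  let : DivisibleBy (PruferGroup q hq) ℤ := divisibleByPrimaryComponent q
  have hφ : Function.Bijective φ :=
    ⟨injective_comp_subtype_pruferGroup hq hx0, surjective_of_divisible h hφ0⟩
  exact ⟨q, hq, ⟨(AddEquiv.ofBijective φ hφ).symm⟩⟩

theorem exists_addEquiv_pruferGroup {G : Type*} [AddCommGroup G] [Infinite G]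
    (h : SupIrred (⊤ : AddSubgroup G)) :
    ∃ (q : ℕ) (hq : q.Prime), Nonempty (G ≃+ PruferGroup q hq) := by
  let : DivisibleBy G ℕ := divisibleByOfSMulRightSurj _ _ fun hn =>
    nsmul_surjective_of_forall_finiteIndex
      (fun H _ => addSubgroup_eq_top_of_finiteIndex_of_supIrred_top h H) hn
  let : DivisibleBy G ℤ := AddGroup.divisibleByIntOfDivisibleByNat G
  exact exists_addEquiv_pruferGroup_of_divisible h

theorem finite_quotient_padicInt_of_isMaximal {p : ℕ} [Fact p.Prime] (m : Ideal ℤ_[p])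
    (hm : m.IsMaximal) : Finite (ℤ_[p] ⧸ m) := by
  rw [IsLocalRing.eq_maximalIdeal hm]
  exact .of_equiv (ZMod p) PadicInt.residueField.symm.toEquiv

theorem artinian_padicInt_proper_subgroups_prufer_general (R : Type*) [CommRing R]
    (hR : ∀ m : Ideal R, m.IsMaximal → Finite (R ⧸ m))
    (G : Type*) [Group G] [Infinite G]
    (A : Type*) [AddCommGroup A] [Module R A] [DistribMulAction G A] [SMulCommClass G R A]
    (hG' : commutator G ≠ ⊤)
    (hfaith : ∀ g : G, (∀ a : A, g • a = a) → g = 1)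
    (hG : ¬ IsArtinian R (A ⧸ moduleCentralizer R A (⊤ : Subgroup G)))
    (hH : ∀ H : Subgroup G, H ≠ ⊤ → IsArtinian R (A ⧸ moduleCentralizer R A H)) :
    ∃ (q : ℕ) (hq : q.Prime), Nonempty (G ≃* Multiplicative (PruferGroup q hq)) := by
  have hirr : SupIrred (⊤ : Subgroup G) :=
    supIrred_top_of_isArtinian_quotient_moduleCentralizer hG hH
  have hcomm : ∀ g h : G, g * h = h * g :=
    commute_of_smul_sub_mem_moduleCentralizer_top hfaith
      (smul_sub_mem_moduleCentralizer_top hR hG' hirr hH)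
  let : CommGroup G := { ‹Group G› with mul_comm := hcomm }
  have hirrAdd : SupIrred (⊤ : AddSubgroup (Additive G)) := by
    simpa only [map_top] using supIrred_orderIso_apply Subgroup.toAddSubgroup hirr
  obtain ⟨q, hq, ⟨e⟩⟩ := exists_addEquiv_pruferGroup hirrAdd
  exact ⟨q, hq, ⟨AddEquiv.toMultiplicativeRight e⟩⟩

/-- Theorem 2.1 (case `R = ℤ_p`): let `A` be a `ℤ_pG`-module where `p` is a prime and `G`
is an infinite group with `G ≠ G'` acting faithfully (`C_G(A) = 1`). If `A/C_A(G)` is not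
an Artinian `ℤ_p`-module and `A/C_A(H)` is an Artinian `ℤ_p`-module for every proper
subgroup `H` of `G`, then `G` is isomorphic to a quasi-cyclic `q`-group for some prime `q`. -/
theorem artinian_padicInt_proper_subgroups_prufer (p : ℕ) [Fact p.Prime]
    (G : Type*) [Group G] [Infinite G]
    (A : Type*) [AddCommGroup A] [Module ℤ_[p] A] [DistribMulAction G A]
    [SMulCommClass G ℤ_[p] A]
    (hG' : commutator G ≠ ⊤)
    (hfaith : ∀ g : G, (∀ a : A, g • a = a) → g = 1)
    (hG : ¬ IsArtinian ℤ_[p] (A ⧸ moduleCentralizer ℤ_[p] A (⊤ : Subgroup G)))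
    (hH : ∀ H : Subgroup G, H ≠ ⊤ → IsArtinian ℤ_[p] (A ⧸ moduleCentralizer ℤ_[p] A H)) :
    ∃ (q : ℕ) (hq : q.Prime), Nonempty (G ≃* Multiplicative (PruferGroup q hq)) :=
  artinian_padicInt_proper_subgroups_prufer_general ℤ_[p] finite_quotient_padicInt_of_isMaximal
    G A hG' hfaith hG hH
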